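/- Let (v,w) be an edge of 𝔅_n other than (s,s), and let the policy π for 𝔇_n be the twin policy of some weak unichain policy for 𝔅_n. Suppose the edge (x_{v,w}, y_{v,w}) is an improving switch for π; let π' be the policy obtained by applying (x_{v,w}, y_{v,w}) to π, and let π'' be the policy obtained by applying (v, x_{v,w}) to π'. Then z_π(x_{v,w}, y_{v,w}) = z_{π'}(v, x_{v,w}) = z_{π''}(π(v), v). -/

import Mathlib

/-! ## The Markov decision process `𝔅_n` -/

/-- Vertices of the MDP `𝔅_n`: a transportation vertex `t`, a sink `s`, a dummy vertex `d`,
and vertices `a i`, `b i` for `i ∈ {1,…,n}`. -/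
inductive BV : Type where
  | t : BV
  | s : BV
  | d : BV
  | a : ℕ → BV
  | b : ℕ → BV
deriving DecidableEq

/-- The vertex `a i` for `i ∈ {1,…,n+1}`, with the convention `a (n+1) = s`. -/
def aN (n i : ℕ) : BV := if i = n + 1 then BV.s else BV.a i

/-- The vertex `b i` for `i ∈ {1,…,n+1}`, with the convention `b (n+1) = d`. -/
def bN (n i : ℕ) : BV := if i = n + 1 then BV.d else BV.b i

/-- The vertex set of `𝔅_n`. -/
def IsBVertex (n : ℕ) : BV → Prop
  | BV.t => True
  | BV.s => True
  | BV.d => True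
  | BV.a i => 1 ≤ i ∧ i ≤ n
  | BV.b i => 1 ≤ i ∧ i ≤ n

/-- The edge relation of `𝔅_n`: travel, enter, skip, board, stay, leave edges,
the edge `(d,s)` and the self-loop `(s,s)`. -/
def BEdge (n : ℕ) (u v : BV) : Prop :=
  (∃ i, 1 ≤ i ∧ i ≤ n ∧ u = BV.t ∧ v = BV.a i) ∨
  (∃ i, 1 ≤ i ∧ i ≤ n ∧ u = BV.a i ∧ v = BV.b i) ∨
  (∃ i, 1 ≤ i ∧ i ≤ n ∧ u = BV.a i ∧ v = aN n (i + 1)) ∨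
  (∃ i, 1 ≤ i ∧ i ≤ n ∧ u = BV.a i ∧ v = BV.t) ∨
  (∃ i, 1 ≤ i ∧ i ≤ n ∧ u = BV.b i ∧ v = bN n (i + 1)) ∨
  (∃ i, 1 ≤ i ∧ i ≤ n ∧ u = BV.b i ∧ v = aN n (i + 1)) ∨
  (u = BV.d ∧ v = BV.s) ∨ (u = BV.s ∧ v = BV.s)

/-- The reward function of `𝔅_n`: `r(enter i) = 2^i`, `r(stay i) = 3/4`,
`r(board i) = -2^i + 5/4`, and reward `0` on all other edges. -/
def rB (n : ℕ) (u v : BV) : ℚ :=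
  match u, v with
  | BV.a i, BV.b j => if i = j then 2 ^ i else 0
  | BV.a i, BV.t => -(2 ^ i) + 5 / 4
  | BV.b i, BV.b j => if j = i + 1 then 3 / 4 else 0
  | BV.b i, BV.d => if i = n then 3 / 4 else 0
  | _, _ => 0

/-- A policy for `𝔅_n` chooses an outgoing edge at every vertex. -/
def IsBPolicy (n : ℕ) (π : BV → BV) : Prop := ∀ u, IsBVertex n u → BEdge n u (π u)

/-- A policy is weak unichain if it reaches the sink `s` from every vertex. -/
def BWeakUnichain (n : ℕ) (π : BV → BV) : Prop :=
  ∀ u, IsBVertex n u → ∃ k, π^[k] u = BV.s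

open Classical in
/-- The value of a vertex `v` w.r.t. a (weak unichain) policy `π`:
the sum of the rewards along the path that `π` takes from `v` to the sink `s`. -/
noncomputable def BVal (n : ℕ) (π : BV → BV) (v : BV) : ℚ :=
  if h : ∃ k, π^[k] v = BV.s then
    ∑ i ∈ Finset.range (Nat.find h), rB n (π^[i] v) (π^[i + 1] v)
  else 0

/-- The reduced costs of the edge `(u,v)` w.r.t. the policy `π`. -/
noncomputable def zB (n : ℕ) (π : BV → BV) (u v : BV) : ℚ :=
  rB n u v + BVal n π v - BVal n π u

/-- The edge `(u,v)` is an improving switch for `π` if its reduced costs are positive. -/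
def BImproving (n : ℕ) (π : BV → BV) (u v : BV) : Prop :=
  BEdge n u v ∧ 0 < zB n π u v

/-- The Bland numbering `𝒩_{𝔅_n}` of the edges of `𝔅_n`. -/
def NB (n : ℕ) (u v : BV) : ℕ :=
  match u, v with
  | BV.t, BV.a i => i
  | BV.a i, BV.b _ => n + 1 + 5 * (i - 1)
  | BV.a i, BV.a _ => n + 2 + 5 * (i - 1)
  | BV.a i, BV.s => n + 2 + 5 * (i - 1)
  | BV.a i, BV.t => n + 3 + 5 * (i - 1)
  | BV.b i, BV.b _ => n + 4 + 5 * (i - 1)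
  | BV.b i, BV.d => n + 4 + 5 * (i - 1)
  | BV.b i, BV.a _ => n + 5 + 5 * (i - 1)
  | BV.b i, BV.s => n + 5 + 5 * (i - 1)
  | BV.d, BV.s => 6 * n + 1
  | BV.s, BV.s => 6 * n + 2
  | _, _ => 0

/-- One step of Bland's policy iteration with edge numbering `N`:
apply the improving switch with the smallest number. -/
def IsBlandStep (n : ℕ) (N : BV → BV → ℕ) (π π' : BV → BV) : Prop :=
  ∃ u v, BImproving n π u v ∧ (∀ u' v', BImproving n π u' v' → N u v ≤ N u' v') ∧
    π' = Function.update π u v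

/-- `BlandReaches n N π ψ` says that Bland's policy iteration started at `π` visits `ψ`. -/
def BlandReaches (n : ℕ) (N : BV → BV → ℕ) : (BV → BV) → (BV → BV) → Prop :=
  Relation.ReflTransGen (IsBlandStep n N)

/-- The canonical policy `π_0` for `0`: `travel 1`, `skip i` and `leave i` are active. -/
def pi0 (n : ℕ) : BV → BV := fun u =>
  match u with
  | BV.t => BV.a 1
  | BV.a i => aN n (i + 1)
  | BV.b i => aN n (i + 1)
  | BV.d => BV.s
  | BV.s => BV.s

/-- The optimal policy `π_*`: `travel 1`, `enter i` for all `i`, `leave j` for `j < n`,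
and `stay n` are active. -/
def piStar (n : ℕ) : BV → BV := fun u =>
  match u with
  | BV.t => BV.a 1
  | BV.a i => BV.b i
  | BV.b i => if i = n then BV.d else BV.a (i + 1)
  | BV.d => BV.s
  | BV.s => BV.s

/-! ## Bits and canonical policies -/

/-- The least significant set bit `ℓ_1(x)` (1-based). -/
noncomputable def lsb (x : ℕ) : ℕ := sInf {i | 1 ≤ i ∧ Nat.testBit x (i - 1)}

/-- The most significant set bit `m(x)` (1-based). -/
noncomputable def msb1 (x : ℕ) : ℕ := sSup {i | 1 ≤ i ∧ Nat.testBit x (i - 1)}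

/-- The least unset bit `ℓ_0(x)` (1-based). -/
noncomputable def lzero (x : ℕ) : ℕ := sInf {i | 1 ≤ i ∧ ¬ Nat.testBit x (i - 1)}

/-- `L_i(x) = max { j ≤ i-2 | x_j = 1 or j = 1 }` (1-based bits). -/
noncomputable def Lfun (i x : ℕ) : ℕ :=
  sSup {j | 1 ≤ j ∧ j ≤ i - 2 ∧ (Nat.testBit x (j - 1) ∨ j = 1)}

/-- `IsCanonical n x π` says that `π` is the canonical policy `π_x` for `x`. -/
noncomputable def IsCanonical (n x : ℕ) (π : BV → BV) : Prop :=
  IsBPolicy n π ∧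
  if x = 0 then
    π BV.t = BV.a 1 ∧
      ∀ i, 1 ≤ i → i ≤ n → π (BV.a i) = aN n (i + 1) ∧ π (BV.b i) = aN n (i + 1)
  else
    π BV.t = BV.a (lsb x) ∧
    π (BV.b (msb1 x)) = aN n (msb1 x + 1) ∧
    (∀ i, msb1 x < i → i ≤ n → π (BV.a i) = aN n (i + 1) ∧ π (BV.b i) = aN n (i + 1)) ∧
    ∀ i, 1 ≤ i → i ≤ n → Nat.testBit x (i - 1) →
      π (BV.a i) = BV.b i ∧
      (i = 2 → π (BV.b 1) = BV.a 2 ∧ (¬ Nat.testBit x 0 → π (BV.a 1) = BV.a 2)) ∧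
      (3 ≤ i → Nat.testBit x (i - 2) → π (BV.b (i - 1)) = BV.a i) ∧
      (3 ≤ i → ¬ Nat.testBit x (i - 2) →
        π (BV.b (i - 1)) = BV.b i ∧ π (BV.a (i - 1)) = BV.a i ∧
        π (BV.b (i - 2)) = BV.a (i - 1) ∧
        (Lfun i x < i - 2 →
          ∀ j, Lfun i x + 1 ≤ j → j ≤ i - 2 →
            π (BV.a j) = BV.t ∧ π (BV.b (j - 1)) = BV.b j) ∧
        (Lfun i x = 1 → ¬ Nat.testBit x 0 → π (BV.a 1) = BV.t))

/-- Activating a list of edges in a policy, from left to right. -/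
def activateList (π : BV → BV) (L : List (BV × BV)) : BV → BV :=
  L.foldl (fun σ e => Function.update σ e.1 e.2) π

/-- The canonical phases w.r.t. an odd number `x` (with `ℓ := ℓ_0(x)`), as a list of edges
to be activated in order. -/
noncomputable def phaseList (n x : ℕ) : List (BV × BV) :=
  let ℓ := lzero x
  (if Nat.testBit x ℓ then [(BV.b ℓ, aN n (ℓ + 1))] else []) ++
  (if Nat.testBit x ℓ ∨ msb1 x < ℓ then [(BV.b (ℓ - 1), BV.b ℓ)] else []) ++
  [(BV.a ℓ, BV.b ℓ), (BV.t, BV.a ℓ)] ++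
  ((List.range (ℓ - 2)).map fun j => (BV.a (j + 1), BV.t)) ++
  [(BV.a (ℓ - 1), BV.a ℓ)] ++
  (((List.range (ℓ - 3)).reverse).map fun j => (BV.b (j + 1), BV.b (j + 2))) ++
  (if ℓ = 2 then [(BV.b 1, BV.a 2)] else [])

/-! ## The Markov decision process `𝔇_n` -/

/-- Vertices of `𝔇_n`: the original vertices (`base`), and for every edge `(v,w)` of `𝔅_n`
other than the self-loop, the gadget vertices `x v w`, `y v w`, `z v w`. -/
inductive DV : Type where
  | base : BV → DV
  | x : BV → BV → DV
  | y : BV → BV → DV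
  | z : BV → BV → DV
deriving DecidableEq

/-- The edges of `𝔅_n` that get replaced by gadgets (all edges except the self-loop `(s,s)`). -/
def DEdgePair (n : ℕ) (v w : BV) : Prop := BEdge n v w ∧ v ≠ BV.s

/-- The vertex set of `𝔇_n`. -/
def IsDVertex (n : ℕ) : DV → Prop
  | DV.base v => IsBVertex n v
  | DV.x v w => DEdgePair n v w
  | DV.y v w => DEdgePair n v w
  | DV.z v w => DEdgePair n v w

/-- The agent vertices of `𝔇_n` (all vertices except the randomization vertices `y v w`). -/
def IsDAgent (n : ℕ) : DV → Prop
  | DV.base v => IsBVertex n v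
  | DV.x v w => DEdgePair n v w
  | DV.y _ _ => False
  | DV.z v w => DEdgePair n v w

/-- The agent edges of `𝔇_n`. -/
def DEdge (n : ℕ) (u u' : DV) : Prop :=
  (∃ v w, DEdgePair n v w ∧
    ((u = DV.base v ∧ u' = DV.x v w) ∨ (u = DV.x v w ∧ u' = DV.base v) ∨
     (u = DV.x v w ∧ u' = DV.y v w) ∨ (u = DV.z v w ∧ u' = DV.base w))) ∨
  (u = DV.base BV.s ∧ u' = DV.base BV.s)

/-- The reward function of `𝔇_n`: the edge `(z v w, w)` carries the reward of the original
edge `(v,w)`; all other agent edges have reward `0`. -/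
def rD (n : ℕ) (u u' : DV) : ℚ :=
  match u, u' with
  | DV.z v w, DV.base w' => if w' = w then rB n v w else 0
  | _, _ => 0

/-- A policy for `𝔇_n` chooses an outgoing agent edge at every agent vertex. -/
def IsDPolicy (n : ℕ) (π : DV → DV) : Prop := ∀ u, IsDAgent n u → DEdge n u (π u)

/-- `IsDVal n p π V` says that `V` satisfies the Bellman equations characterizing the value
function of the policy `π` for `𝔇_n` with probabilities `p`, with `V s = 0`. -/
def IsDVal (n : ℕ) (p : BV → ℚ) (π : DV → DV) (V : DV → ℚ) : Prop :=
  V (DV.base BV.s) = 0 ∧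
  (∀ u, IsDAgent n u → V u = rD n u (π u) + V (π u)) ∧
  (∀ v w, DEdgePair n v w →
    V (DV.y v w) = p v * V (DV.z v w) + (1 - p v) * V (DV.base v))

open Classical in
/-- The value function of a (weak unichain) policy `π` for `𝔇_n`: the unique solution of the
Bellman equations (normalized to `0` outside the vertex set). -/
noncomputable def DVal (n : ℕ) (p : BV → ℚ) (π : DV → DV) : DV → ℚ :=
  if h : ∃! V : DV → ℚ, IsDVal n p π V ∧ ∀ u, ¬ IsDVertex n u → V u = 0 then
    h.exists.choose
  else fun _ => 0

/-- The reduced costs of an agent edge `(u,u')` of `𝔇_n` w.r.t. the policy `π`. -/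
noncomputable def zD (n : ℕ) (p : BV → ℚ) (π : DV → DV) (u u' : DV) : ℚ :=
  rD n u u' + DVal n p π u' - DVal n p π u

/-- An agent edge of `𝔇_n` is an improving switch if its reduced costs are positive. -/
def DImproving (n : ℕ) (p : BV → ℚ) (π : DV → DV) (u u' : DV) : Prop :=
  DEdge n u u' ∧ 0 < zD n p π u u'

/-- One (agent or positive-probability randomization) step of the process `𝔇_n` under `π`. -/
def DStep (n : ℕ) (p : BV → ℚ) (π : DV → DV) (u u' : DV) : Prop :=
  (IsDAgent n u ∧ u' = π u) ∨
  (∃ v w, DEdgePair n v w ∧ u = DV.y v w ∧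
    ((u' = DV.z v w ∧ 0 < p v) ∨ (u' = DV.base v ∧ 0 < 1 - p v)))

/-- A policy for `𝔇_n` is weak unichain if it reaches `s` with probability one from every
vertex, i.e. `s` is reachable via active/positive-probability steps from every vertex. -/
def DWeakUnichain (n : ℕ) (p : BV → ℚ) (π : DV → DV) : Prop :=
  ∀ u, IsDVertex n u → Relation.ReflTransGen (DStep n p π) u (DV.base BV.s)

/-- The twin policy of a policy `π` for `𝔅_n`: every vertex `v ≠ s` is `π v`-oriented. -/
def twin (π : BV → BV) : DV → DV := fun u =>
  match u with
  | DV.base v => if v = BV.s then DV.base BV.s else DV.x v (π v)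
  | DV.x v w => if w = π v then DV.y v w else DV.base v
  | DV.y v w => DV.y v w
  | DV.z _ w => DV.base w

/-- The vertex numbering `𝒩_V` of `𝔅_n`: the order `(t, a 1, b 1, a 2, b 2, …, a n, b n, d, s)`. -/
def NV (n : ℕ) : BV → ℕ
  | BV.t => 1
  | BV.a i => 2 * i
  | BV.b i => 2 * i + 1
  | BV.d => 2 * n + 2
  | BV.s => 2 * n + 3

/-- The specific probabilities `p_v = 2^{-𝒩_V(v)·(n+5)}`. -/
noncomputable def pSpec (n : ℕ) (v : BV) : ℚ := (2 : ℚ) ^ (-((NV n v * (n + 5) : ℕ) : ℤ))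

/-- The set `B(v)` of agent edges of `𝔇_n` belonging to the vertex `v`. -/
def Belongs (n : ℕ) (v : BV) (e : DV × DV) : Prop :=
  ∃ w, DEdgePair n v w ∧
    (e = (DV.x v w, DV.y v w) ∨ e = (DV.base v, DV.x v w) ∨ e = (DV.x v w, DV.base v))

/-- Applying the improving switch `e` to the policy `π` yields `π'`. -/
def DApply (n : ℕ) (p : BV → ℚ) (π : DV → DV) (e : DV × DV) (π' : DV → DV) : Prop :=
  DImproving n p π e.1 e.2 ∧ π' = Function.update π e.1 e.2

/-- One step of Bland's policy iteration on `𝔇_n` with edge numbering `N`. -/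
def IsBlandStepD (n : ℕ) (p : BV → ℚ) (N : DV → DV → ℕ) (π π' : DV → DV) : Prop :=
  ∃ u u', DImproving n p π u u' ∧ (∀ a b, DImproving n p π a b → N u u' ≤ N a b) ∧
    π' = Function.update π u u'

/-- One step of Dantzig's policy iteration on `𝔇_n`: apply an improving switch of maximal
reduced costs. -/
def DantzigStep (n : ℕ) (p : BV → ℚ) (π π' : DV → DV) : Prop :=
  ∃ u u', DImproving n p π u u' ∧
    (∀ a b, DImproving n p π a b → zD n p π a b ≤ zD n p π u u') ∧
    π' = Function.update π u u'

/-- The finite set of vertices of `𝔅_n`, as a `Finset`. -/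
noncomputable def BVSet (n : ℕ) : Finset BV :=
  {BV.t, BV.d, BV.s} ∪ (Finset.Icc 1 n).image BV.a ∪ (Finset.Icc 1 n).image BV.b

/-- The finite set of agent vertices of `𝔇_n`, as a `Finset`. -/
noncomputable def DAgentSet (n : ℕ) : Finset DV := by
  classical
  exact ((BVSet n).image DV.base) ∪
    (((BVSet n ×ˢ BVSet n).filter fun e => DEdgePair n e.1 e.2).image fun e => DV.x e.1 e.2) ∪
    (((BVSet n ×ˢ BVSet n).filter fun e => DEdgePair n e.1 e.2).image fun e => DV.z e.1 e.2)

/-- The objective of the Largest Increase rule: the sum of the values of all agent vertices. -/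
noncomputable def LIobj (n : ℕ) (p : BV → ℚ) (π : DV → DV) : ℚ :=
  ∑ u ∈ DAgentSet n, DVal n p π u

/-- One step of the Largest Increase policy iteration on `𝔇_n`: apply an improving switch
maximizing the sum of all agent vertex values of the resulting policy. -/
def LIStep (n : ℕ) (p : BV → ℚ) (π π' : DV → DV) : Prop :=
  ∃ u u', DImproving n p π u u' ∧
    (∀ a b, DImproving n p π a b →
      LIobj n p (Function.update π a b) ≤ LIobj n p (Function.update π u u')) ∧
    π' = Function.update π u u'

/-- `N` is a Bland numbering `𝒩_{𝔇_n}` for `𝔇_n`: it is injective on agent edges, the edges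
`(x v w, v)` all come first, within each gadget `(x v w, y v w)` precedes `(v, x v w)`,
the gadget blocks are ordered according to `𝒩_{𝔅_n}`, and the self-loop comes last. -/
def IsDBlandNumbering (n : ℕ) (N : DV → DV → ℕ) : Prop :=
  (∀ u₁ u₂ u₁' u₂', DEdge n u₁ u₂ → DEdge n u₁' u₂' → N u₁ u₂ = N u₁' u₂' →
    u₁ = u₁' ∧ u₂ = u₂') ∧
  (∀ v w v' w', DEdgePair n v w → DEdgePair n v' w' →
    N (DV.x v w) (DV.base v) < N (DV.x v' w') (DV.y v' w')) ∧
  (∀ v w, DEdgePair n v w → N (DV.x v w) (DV.y v w) < N (DV.base v) (DV.x v w)) ∧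
  (∀ v w v' w', DEdgePair n v w → DEdgePair n v' w' → NB n v w < NB n v' w' →
    N (DV.base v) (DV.x v w) < N (DV.x v' w') (DV.y v' w')) ∧
  (∀ v w, DEdgePair n v w → N (DV.base v) (DV.x v w) < N (DV.base BV.s) (DV.base BV.s))

/-!
A switch at `v` to `w` with positive reduced costs in `𝔅_n` never closes a cycle: the rewards are
dominated by the increments of a potential, so the cycle would have nonpositive reward. Hence the
switched policy is again weak unichain.

All three policies for `𝔇_n` simulate a weak unichain policy for `𝔅_n`: the first two simulate the
original one, the third the switched one. A gadget that is switched on passes a move on with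
probability `p v` and otherwise retries, so simulating a policy preserves the values at the
vertices of `𝔅_n`, while entering an unused gadget gains `p v` times the reduced costs of its edge.
The first two reduced costs are therefore `p v` times those of `(v, w)` in `𝔅_n`. The third is
minus `p v` times the reduced costs of the old edge `(v, π v)` after the switch, and switching
back loses exactly what the switch gained, because no path from `w` or `π v` revisits `v`.
-/

open Function

section Graph

variable {n i j : ℕ} {u w : BV}

theorem isBVertex_aN (hi : 1 ≤ i) (hin : i ≤ n + 1) : IsBVertex n (aN n i) := by
  unfold aN
  split_ifs with h
  · trivial
  · exact ⟨hi, by omega⟩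

theorem isBVertex_bN (hi : 1 ≤ i) (hin : i ≤ n + 1) : IsBVertex n (bN n i) := by
  unfold bN
  split_ifs with h
  · trivial
  · exact ⟨hi, by omega⟩

theorem BEdge.isBVertex_left (h : BEdge n u w) : IsBVertex n u := by
  rcases h with ⟨i, -, -, rfl, -⟩ | ⟨i, h1, hn, rfl, -⟩ | ⟨i, h1, hn, rfl, -⟩ |
    ⟨i, h1, hn, rfl, -⟩ | ⟨i, h1, hn, rfl, -⟩ | ⟨i, h1, hn, rfl, -⟩ | ⟨rfl, -⟩ | ⟨rfl, -⟩
  exacts [trivial, ⟨h1, hn⟩, ⟨h1, hn⟩, ⟨h1, hn⟩, ⟨h1, hn⟩, ⟨h1, hn⟩, trivial, trivial]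

theorem BEdge.isBVertex_right (h : BEdge n u w) : IsBVertex n w := by
  rcases h with ⟨i, h1, hn, -, rfl⟩ | ⟨i, h1, hn, -, rfl⟩ | ⟨i, h1, hn, -, rfl⟩ |
    ⟨i, -, -, -, rfl⟩ | ⟨i, h1, hn, -, rfl⟩ | ⟨i, h1, hn, -, rfl⟩ | ⟨-, rfl⟩ | ⟨-, rfl⟩
  exacts [⟨h1, hn⟩, ⟨h1, hn⟩, isBVertex_aN (by omega) (by omega), trivial,
    isBVertex_bN (by omega) (by omega), isBVertex_aN (by omega) (by omega), trivial, trivial]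

theorem BEdge.eq_sink (h : BEdge n BV.s w) : w = BV.s := by
  simpa [BEdge] using h

theorem rB_a_aN : rB n (BV.a i) (aN n j) = 0 := by
  unfold aN
  split_ifs <;> rfl

theorem rB_b_aN : rB n (BV.b i) (aN n j) = 0 := by
  unfold aN
  split_ifs <;> rfl

theorem rB_b_bN_succ : rB n (BV.b i) (bN n (i + 1)) = 3 / 4 := by
  unfold bN
  split_ifs with h
  · exact if_pos (Nat.succ_injective h)
  · exact if_pos rfl

/-- A potential on the vertices of `𝔅_n` whose increment along an edge is at least the reward of
that edge, so that every cycle has nonpositive total reward. -/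
def potential (n : ℕ) : BV → ℚ
  | BV.t => 2
  | BV.s => 2 ^ (n + 2)
  | BV.d => 2 ^ (n + 2)
  | BV.a i => 2 ^ i
  | BV.b i => 2 ^ (i + 1)

theorem two_pow_le_potential_aN : 2 ^ i ≤ potential n (aN n i) := by
  unfold aN
  split_ifs with h
  · exact pow_le_pow_right₀ one_le_two (by omega)
  · exact le_rfl

theorem potential_bN : potential n (bN n i) = 2 ^ (i + 1) := by
  unfold bN
  split_ifs with h
  · rw [h]; rfl
  · rfl

theorem rB_add_potential_le (h : BEdge n u w) : rB n u w + potential n u ≤ potential n w := by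
  have two_le {i : ℕ} (hi : 1 ≤ i) : (2 : ℚ) ≤ 2 ^ i := le_self_pow₀ one_le_two (by omega)
  rcases h with ⟨i, h1, -, rfl, rfl⟩ | ⟨i, -, -, rfl, rfl⟩ | ⟨i, h1, -, rfl, rfl⟩ |
    ⟨i, -, -, rfl, rfl⟩ | ⟨i, h1, -, rfl, rfl⟩ | ⟨i, -, -, rfl, rfl⟩ | ⟨rfl, rfl⟩ | ⟨rfl, rfl⟩
  · simpa [rB, potential] using two_le h1
  · simp only [rB, potential, if_true, pow_succ]
    linarith
  · have := two_pow_le_potential_aN (n := n) (i := i + 1)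
    rw [rB_a_aN, potential]
    linarith [two_le h1, pow_succ (2 : ℚ) i]
  · simp only [rB, potential]
    linarith
  · rw [rB_b_bN_succ, potential_bN, potential]
    linarith [two_le h1, pow_succ (2 : ℚ) i, pow_succ (2 : ℚ) (i + 1)]
  · rw [rB_b_aN, potential, zero_add]
    exact two_pow_le_potential_aN
  · simp [rB, potential]
  · simp [rB, potential]

end Graph

theorem BVal_sink (n : ℕ) (π : BV → BV) : BVal n π BV.s = 0 := by
  have h : ∃ k, π^[k] BV.s = BV.s := ⟨0, rfl⟩
  rw [BVal, dif_pos h, (Nat.find_eq_zero h).2 rfl, Finset.sum_range_zero]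

theorem BVal_eq_add (n : ℕ) {π : BV → BV} {u : BV} (hu : u ≠ BV.s) (h : ∃ k, π^[k] u = BV.s) :
    BVal n π u = rB n u (π u) + BVal n π (π u) := by
  classical
  have h' : ∃ k, π^[k] (π u) = BV.s := by
    obtain ⟨_ | k, hk⟩ := h
    · exact absurd hk hu
    · exact ⟨k, hk⟩
  rw [BVal, BVal, dif_pos h, dif_pos h', Nat.find_comp_succ h h' hu, Finset.sum_range_succ',
    add_comm]
  rfl

section Policy

variable {n : ℕ} {π : BV → BV} {u v w : BV}

theorem IsBPolicy.update (hπ : IsBPolicy n π) (hvw : BEdge n v w) :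
    IsBPolicy n (update π v w) := by
  intro u hu
  rcases eq_or_ne u v with rfl | huv
  · rwa [update_self]
  · rw [update_of_ne huv]
    exact hπ u hu

@[elab_as_elim]
theorem BWeakUnichain.induction {motive : BV → Prop} (hwu : BWeakUnichain n π)
    (hπ : IsBPolicy n π) (sink : motive BV.s)
    (step : ∀ u, IsBVertex n u → u ≠ BV.s → motive (π u) → motive u) (hu : IsBVertex n u) :
    motive u := by
  obtain ⟨k, hk⟩ := hwu u hu
  induction k generalizing u with
  | zero => exact (show u = BV.s from hk) ▸ sink
  | succ k ih =>
    rcases eq_or_ne u BV.s with rfl | hus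
    · exact sink
    · exact step u hu hus (ih (hπ u hu).isBVertex_right hk)

theorem BWeakUnichain.iterate_apply_ne (hwu : BWeakUnichain n π) (hπ : IsBPolicy n π)
    (hv : IsBVertex n v) (hvs : v ≠ BV.s) (j : ℕ) : π^[j] (π v) ≠ v := by
  intro hj
  obtain ⟨k, hk⟩ := hwu v hv
  have sink_fixed : π BV.s = BV.s := (hπ BV.s trivial).eq_sink
  have periodic : π^[k * (j + 1)] v = v :=
    IsPeriodicPt.const_mul (m := j + 1) hj k
  rw [Nat.mul_succ, iterate_add_apply, hk, iterate_fixed sink_fixed] at periodic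
  exact hvs periodic.symm

theorem BVal_add_potential_le_iterate (hwu : BWeakUnichain n π) (hπ : IsBPolicy n π)
    (hu : IsBVertex n u) (j : ℕ) :
    BVal n π u + potential n u ≤ BVal n π (π^[j] u) + potential n (π^[j] u) := by
  induction j generalizing u with
  | zero => exact le_rfl
  | succ j ih =>
    refine le_trans ?_ (ih (hπ u hu).isBVertex_right)
    rcases eq_or_ne u BV.s with rfl | hus
    · rw [(hπ _ hu).eq_sink]
    · rw [BVal_eq_add n hus (hwu u hu)]
      linarith [rB_add_potential_le (hπ u hu)]

theorem iterate_ne_of_zB_pos (hwu : BWeakUnichain n π) (hπ : IsBPolicy n π)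
    (hvw : BEdge n v w) (hpos : 0 < zB n π v w) (j : ℕ) : π^[j] w ≠ v := by
  intro hj
  have mono := BVal_add_potential_le_iterate hwu hπ hvw.isBVertex_right j
  rw [hj] at mono
  rw [zB] at hpos
  linarith [rB_add_potential_le hvw]

theorem iterate_update_of_iterate_ne (h : ∀ j, π^[j] u ≠ v) (j : ℕ) :
    (update π v w)^[j] u = π^[j] u := by
  induction j with
  | zero => rfl
  | succ j ih => rw [iterate_succ_apply', iterate_succ_apply', ih, update_of_ne (h j)]

theorem BWeakUnichain.update_of_zB_pos (hwu : BWeakUnichain n π) (hπ : IsBPolicy n π)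
    (hvw : BEdge n v w) (hpos : 0 < zB n π v w) : BWeakUnichain n (update π v w) := by
  intro u hu
  refine hwu.induction hπ ⟨0, rfl⟩ ?_ hu
  rintro u - - ⟨k, hk⟩
  rcases eq_or_ne u v with rfl | huv
  · obtain ⟨m, hm⟩ := hwu w hvw.isBVertex_right
    refine ⟨m + 1, ?_⟩
    rw [iterate_succ_apply, update_self,
      iterate_update_of_iterate_ne (iterate_ne_of_zB_pos hwu hπ hvw hpos), hm]
  · exact ⟨k + 1, by rwa [iterate_succ_apply, update_of_ne huv]⟩

theorem BVal_update_of_iterate_ne (hwu : BWeakUnichain n π) (hπ : IsBPolicy n π)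
    (hwu' : BWeakUnichain n (update π v w)) (hu : IsBVertex n u) (h : ∀ j, π^[j] u ≠ v) :
    BVal n (update π v w) u = BVal n π u := by
  revert h
  refine hwu.induction hπ ?_ ?_ hu
  · intro _
    rw [BVal_sink, BVal_sink]
  · intro u hu hus ih h
    rw [BVal_eq_add n hus (hwu u hu), BVal_eq_add n hus (hwu' u hu),
      update_of_ne (show u ≠ v from h 0), ih fun j => h (j + 1)]

theorem zB_apply_self (hwu : BWeakUnichain n π) (hv : IsBVertex n v) (hvs : v ≠ BV.s) :
    zB n π v (π v) = 0 := by
  rw [zB, BVal_eq_add n hvs (hwu v hv), sub_self]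

theorem zB_update_apply (hwu : BWeakUnichain n π) (hπ : IsBPolicy n π)
    (hwu' : BWeakUnichain n (update π v w)) (hvw : DEdgePair n v w) :
    zB n (update π v w) v (π v) = -zB n π v w := by
  obtain ⟨hE, hvs⟩ := hvw
  have hv := hE.isBVertex_left
  have old_succ : BVal n (update π v w) (π v) = BVal n π (π v) :=
    BVal_update_of_iterate_ne hwu hπ hwu' (hπ v hv).isBVertex_right
      (hwu.iterate_apply_ne hπ hv hvs)
  have new_succ : BVal n (update π v w) w = BVal n π w := by
    have restore : update (update π v w) v (π v) = π := by rw [update_idem, update_eq_self]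
    have avoids := hwu'.iterate_apply_ne (hπ.update hE) hv hvs
    rw [update_self] at avoids
    have := BVal_update_of_iterate_ne (w := π v) hwu' (hπ.update hE) (by rwa [restore])
      hE.isBVertex_right avoids
    rw [← this, restore]
  have step_new := BVal_eq_add n hvs (hwu' v hv)
  rw [update_self] at step_new
  rw [zB, zB, step_new, BVal_eq_add n hvs (hwu v hv), old_succ, new_succ]
  ring

end Policy

section Value

variable {n : ℕ} {p : BV → ℚ} {P : DV → DV} {V W : DV → ℚ} {u u' : DV}

theorem IsDAgent.isDVertex (hu : IsDAgent n u) : IsDVertex n u := by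
  cases u with
  | y => exact hu.elim
  | _ => exact hu

theorem DEdge.isDVertex_right (h : DEdge n u u') : IsDVertex n u' := by
  rcases h with ⟨v, w, hvw, ⟨-, rfl⟩ | ⟨-, rfl⟩ | ⟨-, rfl⟩ | ⟨-, rfl⟩⟩ | ⟨-, rfl⟩
  exacts [hvw, hvw.1.isBVertex_left, hvw, hvw.1.isBVertex_right, trivial]

theorem IsDVal.congr (hP : IsDPolicy n P) (hV : IsDVal n p P V)
    (h : ∀ u, IsDVertex n u → W u = V u) : IsDVal n p P W := by
  refine ⟨?_, fun u hu => ?_, fun v w hvw => ?_⟩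
  · rw [h (DV.base BV.s) trivial, hV.1]
  · rw [h u hu.isDVertex, h (P u) (hP u hu).isDVertex_right, hV.2.1 u hu]
  · rw [h (DV.y v w) hvw, h (DV.z v w) hvw, h (DV.base v) hvw.1.isBVertex_left, hV.2.2 v w hvw]

theorem IsDVal.DVal_eq (hP : IsDPolicy n P) (hV : IsDVal n p P V)
    (unique : ∀ W, IsDVal n p P W → ∀ u, IsDVertex n u → W u = V u) (hu : IsDVertex n u) :
    DVal n p P u = V u := by
  classical
  have hex : ∃! W : DV → ℚ, IsDVal n p P W ∧ ∀ u, ¬IsDVertex n u → W u = 0 := by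
    refine ⟨fun u => if IsDVertex n u then V u else 0,
      ⟨hV.congr hP fun u hu => if_pos hu, fun u hu => if_neg hu⟩, ?_⟩
    rintro W ⟨hW, hW0⟩
    funext u
    split_ifs with hu
    · exact unique W hW u hu
    · exact hW0 u hu
  rw [DVal, dif_pos hex]
  exact unique _ hex.exists.choose_spec.1 u hu

end Value

/-- The policy `P` for `𝔇_n` simulates the policy `σ` for `𝔅_n`: every vertex `u ≠ s` enters its
gadget towards `σ u`, and that gadget is switched on. Unlike in the twin policy of `σ`, gadgets
that are not entered may be switched on as well. -/
structure Simulates (P : DV → DV) (σ : BV → BV) : Prop where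
  sink : P (DV.base BV.s) = DV.base BV.s
  base : ∀ u, u ≠ BV.s → P (DV.base u) = DV.x u (σ u)
  x_apply : ∀ u, P (DV.x u (σ u)) = DV.y u (σ u)
  x : ∀ u w, P (DV.x u w) = DV.y u w ∨ P (DV.x u w) = DV.base u
  z : ∀ u w, P (DV.z u w) = DV.base w

theorem simulates_twin (π : BV → BV) : Simulates (twin π) π where
  sink := rfl
  base _ hu := if_neg hu
  x_apply _ := if_pos rfl
  x u w := (em (w = π u)).imp (fun h => if_pos h) fun h => if_neg h
  z _ _ := rfl

/-- The value that a vertex of `𝔇_n` has under a policy `P` simulating `σ`, expressed through the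
values and reduced costs of `σ` in `𝔅_n`. -/
noncomputable def simulatedVal (n : ℕ) (p : BV → ℚ) (P : DV → DV) (σ : BV → BV) : DV → ℚ
  | DV.base u => BVal n σ u
  | DV.x u w =>
      if P (DV.x u w) = DV.y u w then BVal n σ u + p u * zB n σ u w else BVal n σ u
  | DV.y u w => BVal n σ u + p u * zB n σ u w
  | DV.z u w => rB n u w + BVal n σ w

namespace Simulates

variable {n : ℕ} {p : BV → ℚ} {P : DV → DV} {σ : BV → BV} {V : DV → ℚ} {u : DV} {v w : BV}

theorem update_x (h : Simulates P σ) (v w : BV) :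
    Simulates (update P (DV.x v w) (DV.y v w)) σ where
  sink := by rw [update_of_ne (by simp), h.sink]
  base u hu := by rw [update_of_ne (by simp), h.base u hu]
  x_apply u := by
    rcases eq_or_ne (DV.x u (σ u)) (DV.x v w) with heq | hne
    · obtain ⟨rfl, rfl⟩ := DV.x.inj heq
      exact update_self ..
    · rw [update_of_ne hne, h.x_apply]
  x u w' := by
    rcases eq_or_ne (DV.x u w') (DV.x v w) with heq | hne
    · obtain ⟨rfl, rfl⟩ := DV.x.inj heq
      exact Or.inl (update_self ..)
    · rw [update_of_ne hne]
      exact h.x u w'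
  z u w' := by rw [update_of_ne (by simp), h.z]

theorem update_base (h : Simulates P σ) (hv : v ≠ BV.s) (hx : P (DV.x v w) = DV.y v w) :
    Simulates (update P (DV.base v) (DV.x v w)) (update σ v w) where
  sink := by rw [update_of_ne (by simpa using hv.symm), h.sink]
  base u hu := by
    rcases eq_or_ne u v with rfl | huv
    · rw [update_self, update_self]
    · rw [update_of_ne (by simpa using huv), update_of_ne huv, h.base u hu]
  x_apply u := by
    rw [update_of_ne (by simp)]
    rcases eq_or_ne u v with rfl | huv
    · rwa [update_self]
    · rw [update_of_ne huv, h.x_apply]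
  x u w' := by
    rw [update_of_ne (by simp)]
    exact h.x u w'
  z u w' := by rw [update_of_ne (by simp), h.z]

theorem isDPolicy (h : Simulates P σ) (hσ : IsBPolicy n σ) : IsDPolicy n P := by
  intro u hu
  match u, hu with
  | DV.base u, hu =>
    rcases eq_or_ne u BV.s with rfl | hus
    · exact Or.inr ⟨rfl, h.sink⟩
    · exact Or.inl ⟨u, σ u, ⟨hσ u hu, hus⟩, Or.inl ⟨rfl, h.base u hus⟩⟩
  | DV.x u w, hu =>
    refine Or.inl ⟨u, w, hu, Or.inr ?_⟩
    rcases h.x u w with hon | hoff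
    · exact Or.inr (Or.inl ⟨rfl, hon⟩)
    · exact Or.inl ⟨rfl, hoff⟩
  | DV.z u w, hu => exact Or.inl ⟨u, w, hu, Or.inr (Or.inr (Or.inr ⟨rfl, h.z u w⟩))⟩

theorem isDVal_simulatedVal (h : Simulates P σ) (hwu : BWeakUnichain n σ) :
    IsDVal n p P (simulatedVal n p P σ) := by
  refine ⟨BVal_sink n σ, fun u hu => ?_, fun v w _ => ?_⟩
  · match u, hu with
    | DV.base u, hu =>
      rcases eq_or_ne u BV.s with rfl | hus
      · rw [h.sink]
        exact (zero_add _).symm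
      · rw [h.base u hus]
        simp only [simulatedVal, rD, h.x_apply, if_true, zB_apply_self hwu hu hus]
        ring
    | DV.x u w, _ =>
      rcases h.x u w with hon | hoff
      · simp only [simulatedVal, rD, hon, if_true, zero_add]
      · simp [simulatedVal, rD, hoff]
    | DV.z u w, _ => simp only [simulatedVal, rD, h.z, if_true]
  · simp only [simulatedVal, zB]
    ring

theorem isDVal_base_eq (h : Simulates P σ) (hσ : IsBPolicy n σ) (hwu : BWeakUnichain n σ)
    (hp : ∀ v, IsBVertex n v → v ≠ BV.s → p v ≠ 0) (hV : IsDVal n p P V) (hv : IsBVertex n v) :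
    V (DV.base v) = BVal n σ v := by
  refine hwu.induction hσ ?_ (fun u hu hus ih => ?_) hv
  · rw [hV.1, BVal_sink]
  · have hE : DEdgePair n u (σ u) := ⟨hσ u hu, hus⟩
    have at_base := hV.2.1 (DV.base u) hu
    have at_x := hV.2.1 (DV.x u (σ u)) hE
    have at_y := hV.2.2 u (σ u) hE
    have at_z := hV.2.1 (DV.z u (σ u)) hE
    simp only [h.base u hus, h.x_apply, h.z, rD, if_true, zero_add] at at_base at_x at_z
    rw [BVal_eq_add n hus (hwu u hu), ← ih, ← at_z]
    apply mul_left_cancel₀ (hp u hu hus)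
    rw [← at_x, ← at_base] at at_y
    linarith

theorem isDVal_eq (h : Simulates P σ) (hσ : IsBPolicy n σ) (hwu : BWeakUnichain n σ)
    (hp : ∀ v, IsBVertex n v → v ≠ BV.s → p v ≠ 0) (hV : IsDVal n p P V) (hu : IsDVertex n u) :
    V u = simulatedVal n p P σ u := by
  have hS : IsDVal n p P (simulatedVal n p P σ) := h.isDVal_simulatedVal hwu
  have eq_base {v : BV} (hv : IsBVertex n v) :
      V (DV.base v) = simulatedVal n p P σ (DV.base v) := h.isDVal_base_eq hσ hwu hp hV hv
  have eq_z {v w : BV} (hvw : DEdgePair n v w) :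
      V (DV.z v w) = simulatedVal n p P σ (DV.z v w) := by
    rw [hV.2.1 (DV.z v w) hvw, hS.2.1 (DV.z v w) hvw, h.z, eq_base hvw.1.isBVertex_right]
  have eq_y {v w : BV} (hvw : DEdgePair n v w) :
      V (DV.y v w) = simulatedVal n p P σ (DV.y v w) := by
    rw [hV.2.2 v w hvw, hS.2.2 v w hvw, eq_z hvw, eq_base hvw.1.isBVertex_left]
  match u, hu with
  | DV.base _, hv => exact eq_base hv
  | DV.z _ _, hvw => exact eq_z hvw
  | DV.y _ _, hvw => exact eq_y hvw
  | DV.x v w, hvw =>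
    rw [hV.2.1 (DV.x v w) hvw, hS.2.1 (DV.x v w) hvw]
    rcases h.x v w with hon | hoff
    · rw [hon, eq_y hvw]
    · rw [hoff, eq_base hvw.1.isBVertex_left]

theorem DVal_eq (h : Simulates P σ) (hσ : IsBPolicy n σ) (hwu : BWeakUnichain n σ)
    (hp : ∀ v, IsBVertex n v → v ≠ BV.s → p v ≠ 0) (hu : IsDVertex n u) :
    DVal n p P u = simulatedVal n p P σ u :=
  (h.isDVal_simulatedVal hwu).DVal_eq (h.isDPolicy hσ)
    (fun _ hW _ => h.isDVal_eq hσ hwu hp hW) hu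

theorem zD_x_y (h : Simulates P σ) (hσ : IsBPolicy n σ) (hwu : BWeakUnichain n σ)
    (hp : ∀ v, IsBVertex n v → v ≠ BV.s → p v ≠ 0) (hvw : DEdgePair n v w)
    (hx : P (DV.x v w) = DV.base v) :
    zD n p P (DV.x v w) (DV.y v w) = p v * zB n σ v w := by
  rw [zD, h.DVal_eq hσ hwu hp (u := DV.x v w) hvw, h.DVal_eq hσ hwu hp (u := DV.y v w) hvw]
  simp [simulatedVal, rD, hx]

theorem zD_base_x (h : Simulates P σ) (hσ : IsBPolicy n σ) (hwu : BWeakUnichain n σ)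
    (hp : ∀ v, IsBVertex n v → v ≠ BV.s → p v ≠ 0) (hvw : DEdgePair n v w)
    (hx : P (DV.x v w) = DV.y v w) :
    zD n p P (DV.base v) (DV.x v w) = p v * zB n σ v w := by
  rw [zD, h.DVal_eq hσ hwu hp (u := DV.x v w) hvw,
    h.DVal_eq hσ hwu hp (u := DV.base v) hvw.1.isBVertex_left]
  simp [simulatedVal, rD, hx]

theorem zD_x_base (h : Simulates P σ) (hσ : IsBPolicy n σ) (hwu : BWeakUnichain n σ)
    (hp : ∀ v, IsBVertex n v → v ≠ BV.s → p v ≠ 0) (hvw : DEdgePair n v w)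
    (hx : P (DV.x v w) = DV.y v w) :
    zD n p P (DV.x v w) (DV.base v) = -(p v * zB n σ v w) := by
  rw [← h.zD_base_x hσ hwu hp hvw hx]
  simp [zD, rD]

end Simulates

section Twin

variable {n : ℕ} {p : BV → ℚ} {π : BV → BV} {v w : BV}

theorem zD_twin_x_y (hπ : IsBPolicy n π) (hwu : BWeakUnichain n π)
    (hp : ∀ v, IsBVertex n v → v ≠ BV.s → p v ≠ 0) (hvw : DEdgePair n v w) :
    zD n p (twin π) (DV.x v w) (DV.y v w) = p v * zB n π v w := by
  have hsim := simulates_twin π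
  rcases eq_or_ne w (π v) with rfl | hne
  · rw [zB_apply_self hwu hvw.1.isBVertex_left hvw.2, zD,
      hsim.DVal_eq hπ hwu hp (u := DV.x v _) hvw, hsim.DVal_eq hπ hwu hp (u := DV.y v _) hvw]
    simp [simulatedVal, rD, hsim.x_apply]
  · exact hsim.zD_x_y hπ hwu hp hvw (if_neg hne)

theorem BWeakUnichain.update_of_DImproving_twin (hwu : BWeakUnichain n π) (hπ : IsBPolicy n π)
    (hp : ∀ v, IsBVertex n v → v ≠ BV.s → 0 < p v) (hvw : DEdgePair n v w)
    (himp : DImproving n p (twin π) (DV.x v w) (DV.y v w)) :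
    BWeakUnichain n (update π v w) := by
  have hpos : 0 < p v * zB n π v w :=
    zD_twin_x_y hπ hwu (fun v hv hvs => (hp v hv hvs).ne') hvw ▸ himp.2
  exact hwu.update_of_zB_pos hπ hvw.1
    (pos_of_mul_pos_right hpos (hp v hvw.1.isBVertex_left hvw.2).le)

end Twin

theorem stmt13_general (n : ℕ) (p : BV → ℚ) (hp : ∀ v, IsBVertex n v → v ≠ BV.s → p v ≠ 0)
    (πB : BV → BV) (hπB : IsBPolicy n πB) (hwu : BWeakUnichain n πB)
    (v w : BV) (hvw : DEdgePair n v w) (hwu' : BWeakUnichain n (update πB v w)) :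
    zD n p (twin πB) (DV.x v w) (DV.y v w) =
      zD n p (update (twin πB) (DV.x v w) (DV.y v w)) (DV.base v) (DV.x v w) ∧
    zD n p (update (twin πB) (DV.x v w) (DV.y v w)) (DV.base v) (DV.x v w) =
      zD n p (update (update (twin πB) (DV.x v w) (DV.y v w)) (DV.base v) (DV.x v w))
        (twin πB (DV.base v)) (DV.base v) := by
  have hσ : IsBPolicy n (update πB v w) := hπB.update hvw.1
  have hold : DEdgePair n v (πB v) := ⟨hπB v hvw.1.isBVertex_left, hvw.2⟩
  have sim₁ := (simulates_twin πB).update_x v w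
  have on_new : update (twin πB) (DV.x v w) (DV.y v w) (DV.x v w) = DV.y v w := update_self ..
  have sim₂ := sim₁.update_base hvw.2 on_new
  have on_old : update (update (twin πB) (DV.x v w) (DV.y v w)) (DV.base v) (DV.x v w)
      (DV.x v (πB v)) = DV.y v (πB v) := by
    rw [update_of_ne (by simp), sim₁.x_apply]
  rw [zD_twin_x_y hπB hwu hp hvw, sim₁.zD_base_x hπB hwu hp hvw on_new,
    (simulates_twin πB).base v hvw.2, sim₂.zD_x_base hσ hwu' hp hold on_old,
    zB_update_apply hwu hπB hwu' hvw, mul_neg, neg_neg]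
  exact ⟨rfl, rfl⟩

/-- Consecutive reduced costs in a gadget: if `(x v w, y v w)` is improving for the twin
policy `π` of a weak unichain policy for `𝔅_n`, and `π'`, `π''` result from applying
`(x v w, y v w)` and then `(v, x v w)`, then
`z_π(x v w, y v w) = z_{π'}(v, x v w) = z_{π''}(π(v), v)`. -/
theorem stmt13 (n : ℕ) (hn : 1 ≤ n) (p : BV → ℚ)
    (hp : ∀ v, IsBVertex n v → v ≠ BV.s → 0 < p v ∧ p v ≤ 1)
    (πB : BV → BV) (hπB : IsBPolicy n πB) (hwu : BWeakUnichain n πB)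
    (v w : BV) (hvw : DEdgePair n v w)
    (himp : DImproving n p (twin πB) (DV.x v w) (DV.y v w)) :
    zD n p (twin πB) (DV.x v w) (DV.y v w) =
      zD n p (Function.update (twin πB) (DV.x v w) (DV.y v w)) (DV.base v) (DV.x v w) ∧
    zD n p (Function.update (twin πB) (DV.x v w) (DV.y v w)) (DV.base v) (DV.x v w) =
      zD n p (Function.update (Function.update (twin πB) (DV.x v w) (DV.y v w))
          (DV.base v) (DV.x v w))
        (twin πB (DV.base v)) (DV.base v) :=
  stmt13_general n p (fun v hv hvs => (hp v hv hvs).1.ne') πB hπB hwu v w hvw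
    (hwu.update_of_DImproving_twin hπB (fun v hv hvs => (hp v hv hvs).1) hvw himp)
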